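/- Let m be a positive integer and let ε = ±1. Then the Baumslag–Solitar group G(m, εm) = ⟨a, b ; a⁻¹bᵐa = b^{εm}⟩ is isomorphic to the generalized free product of the group L = ⟨a, c ; a⁻¹ca = c^{ε}⟩ (which is the Baumslag–Solitar group G(1, ε)) and the infinite cyclic group ⟨b⟩, amalgamating the cyclic subgroup of L generated by c with the subgroup of ⟨b⟩ generated by bᵐ via the isomorphism sending c to bᵐ; moreover, the amalgamated subgroups ⟨c⟩ and ⟨bᵐ⟩ are normal in the respective factors. -/

import Mathlib

/-- The two factors of the generalized free product, indexed by `Bool`. -/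
abbrev amalgFactor (A B : Type) : Bool → Type
  | true => A
  | false => B

instance (A B : Type) [Group A] [Group B] : ∀ b, Group (amalgFactor A B b)
  | true => ‹Group A›
  | false => ‹Group B›

/-- The pair of maps identifying the amalgamated subgroup `H = K` inside the two factors:
the inclusion `H ↪ A` and the composition of `φ : H ≃ K` with the inclusion `K ↪ B`. -/
def amalgMaps {A B : Type} [Group A] [Group B] (H : Subgroup A) (K : Subgroup B)
    (φ : H ≃* K) : ∀ b, ↥H →* amalgFactor A B b
  | true => H.subtype
  | false => K.subtype.comp φ.toMonoidHom

/-- The generalized free product `(A ∗ B; H = K, φ)`, i.e. the amalgamated free product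
(pushout) of `A` and `B` over `H` identified with `K` via `φ`. -/
abbrev AmalgamatedProduct {A B : Type} [Group A] [Group B] (H : Subgroup A) (K : Subgroup B)
    (φ : H ≃* K) : Type :=
  Monoid.PushoutI (amalgMaps H K φ)

/-- The single defining relation `a⁻¹ bᵐ a (bⁿ)⁻¹` of the Baumslag–Solitar group, as a
subset of the free group on two generators (`false` plays the role of `a`, `true` of `b`). -/
def bsRel (m n : ℤ) : Set (FreeGroup Bool) :=
  {(FreeGroup.of false)⁻¹ * (FreeGroup.of true) ^ m * FreeGroup.of false *
    ((FreeGroup.of true) ^ n)⁻¹}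

/-- The Baumslag–Solitar group `G(m,n) = ⟨a, b ; a⁻¹ bᵐ a = bⁿ⟩`. -/
abbrev BaumslagSolitar (m n : ℤ) : Type :=
  PresentedGroup (bsRel m n)

/-!
The relation `a⁻¹ b^(pm) a = b^(qm)` says exactly that `c = b^m` satisfies `a⁻¹ c^p a = c^q`, so
`G(pm, qm)` arises from `G(p, q) = ⟨a, c⟩` by adjoining an `m`-th root `b` of `c`, which is the
amalgamation `c = b^m`. The two universal properties give mutually inverse homomorphisms.
When `p` and `q` are units, `c^p` and `c^q` both generate `⟨c⟩`, so conjugation by `a` preserves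
`⟨c⟩`.
-/

open Subgroup Multiplicative

theorem zpowers_zpow_of_isUnit {G : Type*} [Group G] (g : G) {n : ℤ} (hn : IsUnit n) :
    zpowers (g ^ n) = zpowers g := by
  rcases Int.isUnit_iff.mp hn with rfl | rfl <;> simp

theorem map_coe_eq_map_coe_of_zpowers {A B M : Type*} [Group A] [Group B] [Monoid M]
    {a : A} {b : B} {φ : zpowers a ≃* zpowers b}
    (hφ : φ ⟨a, mem_zpowers a⟩ = ⟨b, mem_zpowers b⟩) {f : A →* M} {g : B →* M}
    (hfg : f a = g b) (x : zpowers a) : f x = g (φ x) := by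
  obtain ⟨_, k, rfl⟩ := x
  have hφk : φ ⟨a ^ k, k, rfl⟩ = ⟨b, mem_zpowers b⟩ ^ k := by
    rw [← hφ, ← map_zpow]; rfl
  have hfgk : f.comp (zpowersHom A a) = g.comp (zpowersHom B b) := MonoidHom.ext_mint (by simpa)
  rw [hφk]
  exact DFunLike.congr_fun hfgk (ofAdd k)

namespace AmalgamatedProduct

variable {A B : Type} [Group A] [Group B] {H : Subgroup A} {K : Subgroup B} (φ : H ≃* K)

/-- The canonical homomorphism from the left factor to the amalgamated product. -/
def inl : A →* AmalgamatedProduct H K φ :=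
  Monoid.PushoutI.of (φ := amalgMaps H K φ) true

/-- The canonical homomorphism from the right factor to the amalgamated product. -/
def inr : B →* AmalgamatedProduct H K φ :=
  Monoid.PushoutI.of (φ := amalgMaps H K φ) false

theorem inl_coe_eq_inr_coe (x : H) : inl φ x = inr φ (φ x) :=
  (Monoid.PushoutI.of_apply_eq_base (amalgMaps H K φ) true x).trans
    (Monoid.PushoutI.of_apply_eq_base (amalgMaps H K φ) false x).symm

variable {φ} {M : Type*} [Monoid M]

/-- The universal property of the amalgamated product: homomorphisms out of the two factors that
agree on the amalgamated subgroups induce a homomorphism out of the product. -/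
def lift (f : A →* M) (g : B →* M) (hfg : ∀ x : H, f x = g (φ x)) :
    AmalgamatedProduct H K φ →* M :=
  Monoid.PushoutI.lift (fun | true => f | false => g) (f.comp H.subtype) <| by
    rintro (_ | _)
    · exact MonoidHom.ext fun x => (hfg x).symm
    · rfl

@[simp]
theorem lift_inl (f : A →* M) (g : B →* M) (hfg : ∀ x : H, f x = g (φ x)) (x : A) :
    lift f g hfg (inl φ x) = f x :=
  Monoid.PushoutI.lift_of (φ := amalgMaps H K φ) _ _ _ (i := true) x

@[simp]
theorem lift_inr (f : A →* M) (g : B →* M) (hfg : ∀ x : H, f x = g (φ x)) (y : B) :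
    lift f g hfg (inr φ y) = g y :=
  Monoid.PushoutI.lift_of (φ := amalgMaps H K φ) _ _ _ (i := false) y

theorem hom_ext {f g : AmalgamatedProduct H K φ →* M}
    (hl : f.comp (inl φ) = g.comp (inl φ)) (hr : f.comp (inr φ) = g.comp (inr φ)) : f = g :=
  Monoid.PushoutI.hom_ext_nonempty fun
    | true => hl
    | false => hr

end AmalgamatedProduct

namespace BaumslagSolitar

open PresentedGroup (of)

theorem conj_zpow_of_true (m n : ℤ) :
    (of false : BaumslagSolitar m n)⁻¹ * of true ^ m * of false = of true ^ n := by
  have h := PresentedGroup.one_of_mem (rels := bsRel m n) rfl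
  simp only [map_mul, map_inv, map_zpow] at h
  exact mul_inv_eq_one.mp h

section lift

variable {G : Type*} [Group G] {m n : ℤ}

/-- The universal property of `G(m, n)`: elements `x` and `y` with `x⁻¹ y^m x = y^n` define a
homomorphism with `a ↦ x` and `b ↦ y`. -/
def lift (x y : G) (h : x⁻¹ * y ^ m * x = y ^ n) : BaumslagSolitar m n →* G :=
  PresentedGroup.toGroup (f := fun | false => x | true => y) <| by
    rintro _ rfl
    simp [h]

@[simp]
theorem lift_of_false (x y : G) (h : x⁻¹ * y ^ m * x = y ^ n) : lift x y h (of false) = x :=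
  PresentedGroup.toGroup.of _

@[simp]
theorem lift_of_true (x y : G) (h : x⁻¹ * y ^ m * x = y ^ n) : lift x y h (of true) = y :=
  PresentedGroup.toGroup.of _

theorem hom_ext {f g : BaumslagSolitar m n →* G} (hfalse : f (of false) = g (of false))
    (htrue : f (of true) = g (of true)) : f = g :=
  PresentedGroup.ext fun
    | false => hfalse
    | true => htrue

end lift

theorem normal_zpowers_of_true {p q : ℤ} (hp : IsUnit p) (hq : IsUnit q) :
    (zpowers (of true : BaumslagSolitar p q)).Normal := by
  set a : BaumslagSolitar p q := of false
  set c : BaumslagSolitar p q := of true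
  have ha : a⁻¹ ∈ normalizer (zpowers c : Set (BaumslagSolitar p q)) := by
    rw [mem_normalizer_iff_map_conj_eq]
    calc (zpowers c).map (MulAut.conj a⁻¹).toMonoidHom
        = (zpowers (c ^ p)).map (MulAut.conj a⁻¹).toMonoidHom := by rw [zpowers_zpow_of_isUnit c hp]
      _ = zpowers (a⁻¹ * c ^ p * a) := by rw [MonoidHom.map_zpowers]; simp
      _ = zpowers (c ^ q) := by rw [conj_zpow_of_true]
      _ = zpowers c := zpowers_zpow_of_isUnit c hq
  refine normalizer_eq_top_iff.mp ((eq_top_iff' _).mpr (PresentedGroup.generated_by _ _ ?_))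
  rintro (_ | _)
  · exact inv_mem_iff.mp ha
  · exact le_normalizer (mem_zpowers c)

/-- The homomorphism `G(p, q) → G(pm, qm)` with `a ↦ a` and `b ↦ b^m`. -/
def zpowHom (p q m : ℤ) : BaumslagSolitar p q →* BaumslagSolitar (p * m) (q * m) :=
  lift (of false) (of true ^ m) <| by simpa only [zpow_mul'] using conj_zpow_of_true (p * m) (q * m)

section amalgamatedProduct

open AmalgamatedProduct (inl inr)

variable {p q m : ℤ}
  {ψ : zpowers (of true : BaumslagSolitar p q) ≃* zpowers (ofAdd m)}

theorem inr_ofAdd_one_zpow (hψ : ψ ⟨of true, mem_zpowers _⟩ = ⟨ofAdd m, mem_zpowers _⟩) :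
    inr ψ (ofAdd 1) ^ m = inl ψ (of true) := by
  calc inr ψ (ofAdd 1) ^ m
      = inr ψ (ofAdd m) := by rw [← map_zpow, ← ofAdd_zsmul, smul_eq_mul, mul_one]
    _ = inr ψ (ψ ⟨of true, mem_zpowers _⟩) := by rw [hψ]
    _ = inl ψ (of true) := (AmalgamatedProduct.inl_coe_eq_inr_coe ψ _).symm

variable (hψ : ψ ⟨of true, mem_zpowers _⟩ = ⟨ofAdd m, mem_zpowers _⟩)

/-- The homomorphism from `G(pm, qm)` to the amalgamated product of `G(p, q)` and `⟨b⟩` with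
`a ↦ a` and `b ↦ b`. -/
def toAmalgamatedProduct :
    BaumslagSolitar (p * m) (q * m) →* AmalgamatedProduct (zpowers (of true)) _ ψ :=
  lift (inl ψ (of false)) (inr ψ (ofAdd 1)) <| by
    simpa only [zpow_mul', inr_ofAdd_one_zpow hψ, map_mul, map_inv, map_zpow] using
      congrArg (inl ψ) (conj_zpow_of_true p q)

/-- The homomorphism to `G(pm, qm)` from the amalgamated product of `G(p, q)` and `⟨b⟩` that is
`zpowHom` on `G(p, q)` and sends `b` to `b`. -/
def ofAmalgamatedProduct :
    AmalgamatedProduct (zpowers (of true)) _ ψ →* BaumslagSolitar (p * m) (q * m) :=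
  AmalgamatedProduct.lift (zpowHom p q m) (zpowersHom _ (of true)) <|
    map_coe_eq_map_coe_of_zpowers hψ <| by simp [zpowHom]

theorem ofAmalgamatedProduct_comp_toAmalgamatedProduct :
    (ofAmalgamatedProduct hψ).comp (toAmalgamatedProduct hψ) = MonoidHom.id _ :=
  hom_ext (by simp [ofAmalgamatedProduct, toAmalgamatedProduct, zpowHom])
    (by simp [ofAmalgamatedProduct, toAmalgamatedProduct])

theorem toAmalgamatedProduct_comp_ofAmalgamatedProduct :
    (toAmalgamatedProduct hψ).comp (ofAmalgamatedProduct hψ) = MonoidHom.id _ :=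
  AmalgamatedProduct.hom_ext
    (hom_ext (by simp [ofAmalgamatedProduct, toAmalgamatedProduct, zpowHom])
      (by simp [ofAmalgamatedProduct, toAmalgamatedProduct, zpowHom, inr_ofAdd_one_zpow hψ]))
    (MonoidHom.ext_mint (by simp [ofAmalgamatedProduct, toAmalgamatedProduct]))

/-- The isomorphism of `G(pm, qm)` with the amalgamated product of `G(p, q)` and the infinite
cyclic group `⟨b⟩`, in which the generator `c` of `G(p, q)` is identified with `b^m`. -/
def mulEquivAmalgamatedProduct :
    BaumslagSolitar (p * m) (q * m) ≃* AmalgamatedProduct (zpowers (of true)) _ ψ :=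
  (toAmalgamatedProduct hψ).toMulEquiv (ofAmalgamatedProduct hψ)
    (ofAmalgamatedProduct_comp_toAmalgamatedProduct hψ)
    (toAmalgamatedProduct_comp_ofAmalgamatedProduct hψ)

end amalgamatedProduct

end BaumslagSolitar

theorem baumslagSolitar_eq_amalgamatedProduct_general (p q m : ℤ)
    (ψ : zpowers (PresentedGroup.of true : BaumslagSolitar p q) ≃* zpowers (ofAdd m))
    (hψ : ψ ⟨PresentedGroup.of true, mem_zpowers _⟩ = ⟨ofAdd m, mem_zpowers _⟩) :
    (IsUnit p → IsUnit q → (zpowers (PresentedGroup.of true : BaumslagSolitar p q)).Normal) ∧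
    (zpowers (ofAdd m)).Normal ∧
    Nonempty (BaumslagSolitar (p * m) (q * m) ≃*
      AmalgamatedProduct (zpowers (PresentedGroup.of true)) (zpowers (ofAdd m)) ψ) :=
  ⟨BaumslagSolitar.normal_zpowers_of_true, inferInstance,
    ⟨BaumslagSolitar.mulEquivAmalgamatedProduct hψ⟩⟩

/-- For `m > 0` and `ε = ±1`, the Baumslag–Solitar group `G(m, εm) = ⟨a, b ; a⁻¹bᵐa = b^(εm)⟩`
is the generalized free product of `L = ⟨a, c ; a⁻¹ca = c^ε⟩ = G(1, ε)` and the infinite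
cyclic group `⟨b⟩` amalgamating `⟨c⟩ ≤ L` with `⟨bᵐ⟩ ≤ ⟨b⟩` via `c ↦ bᵐ`; moreover the
amalgamated subgroups `⟨c⟩` and `⟨bᵐ⟩` are normal in the respective factors.
(The element `c` of `L` is `PresentedGroup.of true`, the infinite cyclic group `⟨b⟩` is
`Multiplicative ℤ` with `b = ofAdd 1`, so `bᵐ = ofAdd m`.) -/
theorem baumslagSolitar_eq_amalgamatedProduct (m : ℤ) (hm : 0 < m) (ε : ℤ)
    (hε : ε = 1 ∨ ε = -1)
    (ψ : ↥(Subgroup.zpowers (PresentedGroup.of true : BaumslagSolitar 1 ε)) ≃*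
         ↥(Subgroup.zpowers (Multiplicative.ofAdd m : Multiplicative ℤ)))
    (hψ : ψ ⟨PresentedGroup.of true, Subgroup.mem_zpowers _⟩ =
          ⟨Multiplicative.ofAdd m, Subgroup.mem_zpowers _⟩) :
    (Subgroup.zpowers (PresentedGroup.of true : BaumslagSolitar 1 ε)).Normal ∧
    (Subgroup.zpowers (Multiplicative.ofAdd m : Multiplicative ℤ)).Normal ∧
    Nonempty (BaumslagSolitar m (ε * m) ≃*
      AmalgamatedProduct (Subgroup.zpowers (PresentedGroup.of true : BaumslagSolitar 1 ε))
        (Subgroup.zpowers (Multiplicative.ofAdd m : Multiplicative ℤ)) ψ) := by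
  have h := baumslagSolitar_eq_amalgamatedProduct_general 1 ε m ψ hψ
  rw [one_mul] at h
  exact ⟨h.1 isUnit_one (Int.isUnit_iff.mpr hε), h.2⟩
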